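/- Let N = M ≥ 2 and consider the softmax reward with inner temperature t and outer temperature τ. If t > 0 and τ ≥ 0, then the heterogeneity gain satisfies ΔR(t,τ;N) ≥ max{σ(t,N) − σ(τ,N), 0}, where σ(t,N) = e^t/(e^t + N − 1). -/

import Mathlib

open Finset

/-- An N×M allocation matrix is admissible if all entries are nonnegative and
every agent's (row's) efforts sum to 1. -/
def Admissible {N M : ℕ} (A : Fin N → Fin M → ℝ) : Prop :=
  (∀ i j, 0 ≤ A i j) ∧ ∀ i, ∑ j, A i j = 1

/-- An allocation is homogeneous if all rows coincide. -/
def Homogeneous {N M : ℕ} (A : Fin N → Fin M → ℝ) : Prop :=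
  ∀ i i' : Fin N, A i = A i'

/-- The column of task `j`. -/
def col {N M : ℕ} (A : Fin N → Fin M → ℝ) (j : Fin M) : Fin N → ℝ :=
  fun i => A i j

/-- Softmax inner aggregator with temperature `t`: the task score
`T_j(A) = Σ_i (e^{t·r_{ij}} / Σ_ℓ e^{t·r_{ℓj}}) · r_{ij}` applied to a column. -/
noncomputable def innerScore (t : ℝ) {N : ℕ} (a : Fin N → ℝ) : ℝ :=
  ∑ i, Real.exp (t * a i) / (∑ l, Real.exp (t * a l)) * a i

/-- Softmax team reward with inner temperature `t` and outer temperature `τ`: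
`R(A) = Σ_j (e^{τ·T_j} / Σ_ℓ e^{τ·T_ℓ}) · T_j`. -/
noncomputable def softReward (t τ : ℝ) {N : ℕ} (A : Fin N → Fin N → ℝ) : ℝ :=
  ∑ j, Real.exp (τ * innerScore t (col A j)) /
      (∑ l, Real.exp (τ * innerScore t (col A l))) * innerScore t (col A j)

/-- `σ(t,N) = e^t / (e^t + N − 1)`. -/
noncomputable def sigma' (t : ℝ) (N : ℕ) : ℝ :=
  Real.exp t / (Real.exp t + N - 1)

/-- Heterogeneity gain `ΔR(t,τ;N) = R_het − R_hom` for the softmax reward. -/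
noncomputable def hetGain (t τ : ℝ) (N : ℕ) : ℝ :=
  sSup {r : ℝ | ∃ A : Fin N → Fin N → ℝ, Admissible A ∧ softReward t τ A = r} -
    sSup {r : ℝ | ∃ A : Fin N → Fin N → ℝ,
      Admissible A ∧ Homogeneous A ∧ softReward t τ A = r}

/-!
The softmax reward of an allocation is the outer score of the vector of its column scores. In a
homogeneous allocation every column is constant, hence scored by its common entry, so the reward is
the outer score of the common row. On the standard simplex the score at temperature `τ ≥ 0` is at
most `σ(τ, N)`, with equality at a vertex, so `R_hom = σ(τ, N)`. The identity allocation is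
admissible with reward `σ(t, N)`, so `R_het ≥ σ(t, N)`, and trivially `R_het ≥ R_hom`.
-/

theorem sum_exp_pos {ι : Type*} [Fintype ι] [Nonempty ι] (f : ι → ℝ) :
    0 < ∑ i, Real.exp (f i) :=
  sum_pos (fun _ _ => Real.exp_pos _) univ_nonempty

section InnerScore

variable {N : ℕ}

theorem innerScore_mem_of_convex [NeZero N] (t : ℝ) {a : Fin N → ℝ} {s : Set ℝ}
    (hs : Convex ℝ s) (ha : ∀ i, a i ∈ s) : innerScore t a ∈ s := by
  have hpos : 0 < ∑ l, Real.exp (t * a l) := sum_exp_pos _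
  refine hs.sum_mem (fun i _ => by positivity) ?_ fun i _ => ha i
  rw [← sum_div, div_self hpos.ne']

theorem innerScore_const [NeZero N] (t c : ℝ) : innerScore t (fun _ : Fin N => c) = c :=
  innerScore_mem_of_convex t (convex_singleton c) fun _ => rfl

theorem innerScore_eq_div (t : ℝ) (a : Fin N → ℝ) :
    innerScore t a = (∑ i, Real.exp (t * a i) * a i) / ∑ i, Real.exp (t * a i) := by
  simp only [innerScore, sum_div, div_mul_eq_mul_div]

theorem innerScore_single (t : ℝ) (j : Fin N) :
    innerScore t (Pi.single j 1) = sigma' t N := by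
  have hexp (i : Fin N) : Real.exp (t * if i = j then 1 else 0) =
      1 + if i = j then Real.exp t - 1 else 0 := by
    split_ifs <;> simp
  have hnum : ∑ i, (Real.exp (t * if i = j then 1 else 0) * if i = j then 1 else 0) =
      Real.exp t := by
    simp
  have hden : ∑ i, Real.exp (t * if i = j then 1 else 0) = Real.exp t + N - 1 := by
    simp only [hexp, sum_add_distrib, sum_ite_eq', mem_univ, if_true, sum_const, card_univ,
      Fintype.card_fin, nsmul_eq_mul, mul_one]
    ring
  simp only [innerScore_eq_div, Pi.single_apply, hnum, hden, sigma']

theorem exp_mul_mul_sub_le {n τ x : ℝ} (hn : 1 ≤ n) (hτ : 0 ≤ τ) (hx : x ∈ Set.Icc 0 1) :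
    Real.exp (τ * x) * ((Real.exp τ + n - 1) * x - Real.exp τ) ≤ Real.exp τ * (n * x - 1) := by
  obtain ⟨hx0, hx1⟩ := hx
  have hlower : 1 ≤ Real.exp (τ * x) := Real.one_le_exp (mul_nonneg hτ hx0)
  have hupper : Real.exp (τ * x) ≤ Real.exp τ :=
    Real.exp_le_exp.2 (mul_le_of_le_one_right hτ hx1)
  -- The difference of the two sides is affine in `exp (τ * x) ∈ [1, exp τ]`, and nonnegative at
  -- both endpoints of that interval.
  have hdiff : 0 ≤ (Real.exp τ - Real.exp (τ * x)) * ((n - 1) * x) +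
      (Real.exp (τ * x) - 1) * (Real.exp τ * (1 - x)) :=
    add_nonneg (mul_nonneg (sub_nonneg.2 hupper) (mul_nonneg (sub_nonneg.2 hn) hx0))
      (mul_nonneg (sub_nonneg.2 hlower) (mul_nonneg (Real.exp_pos τ).le (sub_nonneg.2 hx1)))
  linear_combination hdiff

theorem innerScore_le_sigma' [NeZero N] {τ : ℝ} (hτ : 0 ≤ τ) {c : Fin N → ℝ}
    (hc : c ∈ stdSimplex ℝ (Fin N)) : innerScore τ c ≤ sigma' τ N := by
  have hN : (1 : ℝ) ≤ N := Nat.one_le_cast.2 NeZero.one_le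
  have hden : 0 < Real.exp τ + N - 1 := by linarith [Real.exp_pos τ]
  rw [innerScore_eq_div, sigma', div_le_div_iff₀ (sum_exp_pos _) hden, ← sub_nonpos]
  calc
    _ = ∑ j, Real.exp (τ * c j) * ((Real.exp τ + N - 1) * c j - Real.exp τ) := by
      rw [sum_mul, mul_sum, ← sum_sub_distrib]
      exact sum_congr rfl fun j _ => by ring
    _ ≤ ∑ j, Real.exp τ * (N * c j - 1) := sum_le_sum fun j _ =>
      exp_mul_mul_sub_le hN hτ (mem_Icc_of_mem_stdSimplex hc j)
    _ = 0 := by rw [← mul_sum, sum_sub_distrib, ← mul_sum, hc.2]; simp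

end InnerScore

section SoftReward

variable {N : ℕ}

theorem softReward_eq_innerScore (t τ : ℝ) (A : Fin N → Fin N → ℝ) :
    softReward t τ A = innerScore τ fun j => innerScore t (col A j) := rfl

theorem admissible_iff_forall_mem_stdSimplex {M : ℕ} {A : Fin N → Fin M → ℝ} :
    Admissible A ↔ ∀ i, A i ∈ stdSimplex ℝ (Fin M) :=
  forall_and.symm

theorem admissible_single : Admissible fun i : Fin N => (Pi.single i 1 : Fin N → ℝ) :=
  admissible_iff_forall_mem_stdSimplex.2 fun i => single_mem_stdSimplex ℝ i

variable [NeZero N]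

theorem softReward_single (t τ : ℝ) :
    softReward t τ (fun i : Fin N => Pi.single i 1) = sigma' t N := by
  have hcol (j : Fin N) : col (fun i : Fin N => (Pi.single i 1 : Fin N → ℝ)) j = Pi.single j 1 :=
    funext fun i => Pi.single_comm i 1 j
  simp only [softReward_eq_innerScore, hcol, innerScore_single, innerScore_const]

theorem Homogeneous.softReward_eq {A : Fin N → Fin N → ℝ} (hA : Homogeneous A) (t τ : ℝ) :
    softReward t τ A = innerScore τ (A 0) := by
  have hcol (j : Fin N) : col A j = fun _ => A 0 j := funext fun i => congrFun (hA i 0) j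
  simp only [softReward_eq_innerScore, hcol, innerScore_const]

theorem Admissible.softReward_le_one {A : Fin N → Fin N → ℝ} (hA : Admissible A) (t τ : ℝ) :
    softReward t τ A ≤ 1 := by
  have hentry (i j : Fin N) : A i j ≤ 1 :=
    (mem_Icc_of_mem_stdSimplex (admissible_iff_forall_mem_stdSimplex.1 hA i) j).2
  exact innerScore_mem_of_convex τ (convex_Iic 1) fun j =>
    innerScore_mem_of_convex t (convex_Iic 1) fun i => hentry i j

theorem Admissible.softReward_le_sSup {A : Fin N → Fin N → ℝ} (hA : Admissible A) (t τ : ℝ) :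
    softReward t τ A ≤
      sSup {r : ℝ | ∃ B : Fin N → Fin N → ℝ, Admissible B ∧ softReward t τ B = r} := by
  refine le_csSup ⟨1, ?_⟩ ⟨A, hA, rfl⟩
  rintro _ ⟨B, hB, rfl⟩
  exact hB.softReward_le_one t τ

theorem isGreatest_softReward_homogeneous (t : ℝ) {τ : ℝ} (hτ : 0 ≤ τ) :
    IsGreatest {r : ℝ | ∃ A : Fin N → Fin N → ℝ,
      Admissible A ∧ Homogeneous A ∧ softReward t τ A = r} (sigma' τ N) := by
  constructor
  · have hom : Homogeneous fun _ : Fin N => (Pi.single 0 1 : Fin N → ℝ) := fun _ _ => rfl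
    exact ⟨_, admissible_iff_forall_mem_stdSimplex.2 fun _ => single_mem_stdSimplex ℝ 0, hom,
      (hom.softReward_eq t τ).trans (innerScore_single τ 0)⟩
  · rintro _ ⟨A, hA, hom, rfl⟩
    rw [hom.softReward_eq]
    exact innerScore_le_sigma' hτ (admissible_iff_forall_mem_stdSimplex.1 hA 0)

end SoftReward

theorem stmt5_general (N : ℕ) [NeZero N] (t τ : ℝ) (hτ : 0 ≤ τ) :
    max (sigma' t N - sigma' τ N) 0 ≤ hetGain t τ N := by
  have hhom := isGreatest_softReward_homogeneous (N := N) t hτ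
  obtain ⟨A, hA, -, hreward⟩ := hhom.1
  rw [hetGain, hhom.csSup_eq]
  refine max_le (sub_le_sub_right ?_ _) (sub_nonneg.2 ?_)
  · exact (softReward_single t τ).ge.trans (admissible_single.softReward_le_sSup t τ)
  · exact hreward.ge.trans (hA.softReward_le_sSup t τ)

/-- Softmax heterogeneity gain, `t > 0`, `τ ≥ 0` case: for
`N = M ≥ 2`, `ΔR(t,τ;N) ≥ max{σ(t,N) − σ(τ,N), 0}`. -/
theorem stmt5 (N : ℕ) (hN : 2 ≤ N) (t τ : ℝ) (ht : 0 < t) (hτ : 0 ≤ τ) :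
    max (sigma' t N - sigma' τ N) 0 ≤ hetGain t τ N := by
  have : NeZero N := ⟨by lia⟩
  exact stmt5_general N t τ hτ
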